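/- arXiv:2208.11110 — 5 statements merged into one kernel-verified Lean document; each statement's English description precedes it below -/
import Mathlib

section
/- Let α = {α_n}_{n∈ℕ} and β = {β_n}_{n∈ℕ} be sequences of positive real numbers such that α is subadditive, β is superadditive, and for each n ∈ ℕ the value →α^β_n = sup{d ∈ ℕ : α_d ≤ β_n} is a natural number. Then the sequence →α^β is superadditive and its asymptotic growth factor satisfies lim_{n→∞} (→α^β_n)/n = β̂/α̂, where α̂ = lim_{n→∞} α_n/n and β̂ = lim_{n→∞} β_n/n (with the conventions r/0 = ∞ and r/∞ = 0 for r ∈ ℝ_{>0}, ∞/0 = ∞, 0/∞ = 0). -/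
open Filter Topology
open scoped ENNReal

/-- Let `α`, `β` be sequences of positive real numbers (indexed by the
positive naturals) with `α` subadditive and `β` superadditive, and suppose that for each
`n ≥ 1` the quantity `→α^β_n = sup {d ∈ ℕ | α d ≤ β n}` is a natural number, i.e. the set
`{d | 1 ≤ d ∧ α d ≤ β n}` has a greatest element `T n`.  Then `T` is superadditive and
`lim T n / n = β̂ / α̂` (division in `ℝ≥0∞`, which realizes the conventions
`r/0 = ∞`, `r/∞ = 0` for `r > 0`, `∞/0 = ∞` and `0/∞ = 0`). -/
theorem statement_0 (α β : ℕ → ℝ) (T : ℕ → ℕ)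
    (hαpos : ∀ n, 1 ≤ n → 0 < α n)
    (hβpos : ∀ n, 1 ≤ n → 0 < β n)
    (hαsub : ∀ i j, 1 ≤ i → 1 ≤ j → α (i + j) ≤ α i + α j)
    (hβsuper : ∀ i j, 1 ≤ i → 1 ≤ j → β i + β j ≤ β (i + j))
    (hT : ∀ n, 1 ≤ n → IsGreatest {d : ℕ | 1 ≤ d ∧ α d ≤ β n} (T n))
    (A B : ℝ≥0∞)
    (hA : Tendsto (fun n : ℕ => ENNReal.ofReal (α n) / (n : ℝ≥0∞)) atTop (𝓝 A))
    (hB : Tendsto (fun n : ℕ => ENNReal.ofReal (β n) / (n : ℝ≥0∞)) atTop (𝓝 B)) :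
    (∀ m n, 1 ≤ m → 1 ≤ n → T m + T n ≤ T (m + n)) ∧
    Tendsto (fun n : ℕ => (T n : ℝ≥0∞) / (n : ℝ≥0∞)) atTop (𝓝 (B / A)) := by
  have hsup : ∀ m n, 1 ≤ m → 1 ≤ n → T m + T n ≤ T (m + n) := by
    intro m n hm hn
    have h1 := (hT m hm).1
    have h2 := (hT n hn).1
    refine (hT (m + n) (by omega)).2 ⟨by have := h1.1; omega, ?_⟩
    linarith [hαsub _ _ h1.1 h2.1, hβsuper m n hm hn, h1.2, h2.2]
  refine ⟨hsup, ?_⟩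
  have hTn : ∀ n, 1 ≤ n → n ≤ T n := by
    intro n hn
    induction n, hn using Nat.le_induction with
    | base => exact (hT 1 le_rfl).1.1
    | succ k hk ih =>
      have := hsup k 1 hk le_rfl
      have := (hT 1 le_rfl).1.1
      omega
  have hβn : ∀ n : ℕ, 1 ≤ n → n * β 1 ≤ β n := by
    intro n hn
    induction n, hn using Nat.le_induction with
    | base => simp
    | succ k hk ih =>
      have := hβsuper k 1 hk le_rfl
      push_cast
      linarith
  have hαn : ∀ n : ℕ, 1 ≤ n → α n ≤ n * α 1 := by
    intro n hn
    induction n, hn using Nat.le_induction with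
    | base => simp
    | succ k hk ih =>
      have := hαsub k 1 hk le_rfl
      push_cast
      linarith
  have n0 : ∀ n : ℕ, 1 ≤ n → (n : ℝ≥0∞) ≠ 0 := by
    intro n hn
    have : n ≠ 0 := by omega
    exact_mod_cast this
  have nt : ∀ n : ℕ, (n : ℝ≥0∞) ≠ ⊤ := fun n => ENNReal.natCast_ne_top n
  have hAt : A ≠ ⊤ := by
    refine ne_top_of_le_ne_top (ENNReal.ofReal_ne_top (r := α 1)) (le_of_tendsto hA ?_)
    filter_upwards [eventually_ge_atTop 1] with n hn
    refine ENNReal.div_le_of_le_mul ?_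
    rw [← ENNReal.ofReal_natCast n, ← ENNReal.ofReal_mul (hαpos 1 le_rfl).le]
    exact ENNReal.ofReal_le_ofReal (by linarith [hαn n hn])
  have hB0 : B ≠ 0 := by
    have h1 : 0 < ENNReal.ofReal (β 1) := ENNReal.ofReal_pos.2 (hβpos 1 le_rfl)
    refine (lt_of_lt_of_le h1 (ge_of_tendsto hB ?_)).ne'
    filter_upwards [eventually_ge_atTop 1] with n hn
    rw [ENNReal.le_div_iff_mul_le (Or.inl (n0 n hn)) (Or.inl (nt n))]
    rw [← ENNReal.ofReal_natCast n, ← ENNReal.ofReal_mul (hβpos 1 le_rfl).le]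
    exact ENNReal.ofReal_le_ofReal (by linarith [hβn n hn])
  have hTt : Tendsto T atTop atTop := by
    refine tendsto_atTop_mono' atTop ?_ tendsto_id
    filter_upwards [eventually_ge_atTop 1] with n hn using hTn n hn
  have hTt1 : Tendsto (fun n => T n + 1) atTop atTop := (tendsto_add_atTop_nat 1).comp hTt
  have hu := ENNReal.Tendsto.div hB (Or.inl hB0) (hA.comp hTt) (Or.inl hAt)
  have hl := ENNReal.Tendsto.div hB (Or.inl hB0) (hA.comp hTt1) (Or.inl hAt)
  have hl2 := ENNReal.Tendsto.sub hl ENNReal.tendsto_inv_nat_nhds_zero (Or.inr ENNReal.zero_ne_top)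
  rw [tsub_zero] at hl2
  have key : ∀ d : ℕ, 1 ≤ d → ENNReal.ofReal (α d) / d ≠ 0 ∧ ENNReal.ofReal (α d) / d ≠ ⊤ := by
    intro d hd
    exact ⟨(ENNReal.div_pos (ENNReal.ofReal_pos.2 (hαpos d hd)).ne' (nt d)).ne',
      ENNReal.div_ne_top ENNReal.ofReal_ne_top (n0 d hd)⟩
  have canc : ∀ d n : ℕ, 1 ≤ d → (d : ℝ≥0∞) / n * (ENNReal.ofReal (α d) / d)
      = ENNReal.ofReal (α d) / n := by
    intro d n hd
    simp only [div_eq_mul_inv]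
    calc _ = (d * (d : ℝ≥0∞)⁻¹) * (ENNReal.ofReal (α d) * (n : ℝ≥0∞)⁻¹) := by ring
      _ = _ := by rw [ENNReal.mul_inv_cancel (n0 d hd) (nt d), one_mul]
  refine tendsto_of_tendsto_of_tendsto_of_le_of_le' hl2 hu ?_ ?_
  · filter_upwards [eventually_ge_atTop 1] with n hn
    simp only [Function.comp]
    rw [tsub_le_iff_right]
    have hd : 1 ≤ T n + 1 := by omega
    obtain ⟨k1, k2⟩ := key _ hd
    rw [ENNReal.div_le_iff k1 k2]
    have e : (T n : ℝ≥0∞) / n + (n : ℝ≥0∞)⁻¹ = ((T n + 1 : ℕ) : ℝ≥0∞) / n := by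
      push_cast
      rw [ENNReal.add_div, one_div]
    rw [e, canc _ _ hd]
    refine ENNReal.div_le_div_right (ENNReal.ofReal_le_ofReal ?_) _
    by_contra hc
    have := (hT n hn).2 ⟨hd, (not_le.1 hc).le⟩
    omega
  · filter_upwards [eventually_ge_atTop 1] with n hn
    simp only [Function.comp]
    have h := (hT n hn).1
    obtain ⟨k1, k2⟩ := key _ h.1
    rw [ENNReal.le_div_iff_mul_le (Or.inl k1) (Or.inl k2), canc _ _ h.1]
    exact ENNReal.div_le_div_right (ENNReal.ofReal_le_ofReal h.2) _
end

section
/- Let α = {α_n}_{n∈ℕ} and β = {β_n}_{n∈ℕ} be sequences of positive real numbers such that α is subadditive, β is superadditive, and for each n ∈ ℕ the value ←β^α_n = inf{d ∈ ℕ : β_d ≥ α_n} is a natural number. Then the sequence ←β^α is subadditive and its asymptotic growth factor satisfies lim_{n→∞} (←β^α_n)/n = α̂/β̂, where α̂ = lim_{n→∞} α_n/n and β̂ = lim_{n→∞} β_n/n (with the conventions r/0 = ∞ and r/∞ = 0 for r ∈ ℝ_{>0}, ∞/0 = ∞, 0/∞ = 0). -/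
open Filter Topology
open scoped ENNReal

theorem aux_sub (α : ℕ → ℝ) (hαsub : ∀ i j, 1 ≤ i → 1 ≤ j → α (i + j) ≤ α i + α j)
    (n : ℕ) (hn : 1 ≤ n) (k : ℕ) : α (n * (k + 1)) ≤ (k + 1 : ℝ) * α n := by
  induction k with
  | zero => simp
  | succ k ih =>
    have h := hαsub (n * (k + 1)) n (Nat.mul_pos hn (Nat.succ_pos k)) hn
    rw [show n * (k + 1 + 1) = n * (k + 1) + n by ring]
    push_cast
    linarith

theorem aux_super (β : ℕ → ℝ) (hβ : ∀ i j, 1 ≤ i → 1 ≤ j → β i + β j ≤ β (i + j))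
    (n : ℕ) (hn : 1 ≤ n) (k : ℕ) : (k + 1 : ℝ) * β n ≤ β (n * (k + 1)) := by
  have h := aux_sub (fun n => - β n) (fun i j hi hj => by have := hβ i j hi hj; linarith)
    n hn k
  linarith

theorem aux_div (x : ℝ) (n k : ℕ) (hn : 1 ≤ n) :
    ENNReal.ofReal ((k + 1 : ℝ) * x) / ((n * (k + 1) : ℕ) : ℝ≥0∞)
      = ENNReal.ofReal x / (n : ℝ≥0∞) := by
  rw [ENNReal.ofReal_mul (by positivity), mul_comm n (k+1)]
  have : ENNReal.ofReal ((k : ℝ) + 1) = ((k + 1 : ℕ) : ℝ≥0∞) := by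
    rw [← ENNReal.ofReal_natCast]; push_cast; rfl
  rw [this, Nat.cast_mul]
  exact ENNReal.mul_div_mul_left _ _ (by simp) (by simp)

theorem aux_subseq (n : ℕ) (hn : 1 ≤ n) : Tendsto (fun k : ℕ => n * (k + 1)) atTop atTop := by
  apply tendsto_atTop_mono (f := fun k : ℕ => k) _ tendsto_id
  intro k
  nlinarith

theorem aux_upper (α β : ℕ → ℝ) (L : ℕ → ℕ)
    (hαpos : ∀ n, 1 ≤ n → 0 < α n)
    (hβpos : ∀ n, 1 ≤ n → 0 < β n)
    (hβsuper : ∀ i j, 1 ≤ i → 1 ≤ j → β i + β j ≤ β (i + j))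
    (hL : ∀ n, 1 ≤ n → IsLeast {d : ℕ | 1 ≤ d ∧ α n ≤ β d} (L n))
    (n d : ℕ) (hn : 1 ≤ n) (hd : 1 ≤ d) :
    (L n : ℝ≥0∞) / (n : ℝ≥0∞) ≤
      (ENNReal.ofReal (α n) / (n : ℝ≥0∞)) * (ENNReal.ofReal (β d) / (d : ℝ≥0∞))⁻¹
        + (d : ℝ≥0∞) / (n : ℝ≥0∞) := by
  have ha := hαpos n hn
  have hb := hβpos d hd
  have hq : 0 < α n / β d := by positivity
  obtain ⟨k, hk⟩ : ∃ k, ⌈α n / β d⌉₊ = k + 1 :=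
    Nat.exists_eq_succ_of_ne_zero (Nat.ceil_pos.2 hq).ne'
  have h1 : α n / β d ≤ (k + 1 : ℝ) := by
    have := Nat.le_ceil (α n / β d); rw [hk] at this; exact_mod_cast this
  have h2 : (k + 1 : ℝ) ≤ α n / β d + 1 := by
    have := (Nat.ceil_lt_add_one hq.le).le; rw [hk] at this; exact_mod_cast this
  have h3 : L n ≤ d * (k + 1) := by
    apply (hL n hn).2
    refine ⟨Nat.mul_pos hd (Nat.succ_pos k), ?_⟩
    refine le_trans ?_ (aux_super β hβsuper d hd k)
    rwa [div_le_iff₀ hb] at h1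
  have hd0 : (0 : ℝ) < d := by exact_mod_cast hd
  have hn0 : (0 : ℝ) < n := by exact_mod_cast hn
  have h4 : (L n : ℝ) / n ≤ (α n / n) * (β d / d)⁻¹ + d / n := by
    have h5 : (L n : ℝ) ≤ d * (k + 1) := by exact_mod_cast h3
    have h6 : (L n : ℝ) ≤ d * (α n / β d + 1) := h5.trans (by gcongr)
    calc (L n : ℝ) / n ≤ d * (α n / β d + 1) / n := by gcongr
      _ = _ := by field_simp
  have h7 := ENNReal.ofReal_le_ofReal h4
  rw [ENNReal.ofReal_add (by positivity) (by positivity), ENNReal.ofReal_mul (by positivity),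
    ENNReal.ofReal_inv_of_pos (by positivity), ENNReal.ofReal_div_of_pos hn0,
    ENNReal.ofReal_div_of_pos hn0, ENNReal.ofReal_div_of_pos hn0, ENNReal.ofReal_div_of_pos hd0]
    at h7
  simpa only [ENNReal.ofReal_natCast] using h7

/-- Let `α`, `β` be sequences of positive real numbers (indexed by the
positive naturals) with `α` subadditive and `β` superadditive, and suppose that for each
`n ≥ 1` the quantity `←β^α_n = inf {d ∈ ℕ | β d ≥ α n}` is a natural number, i.e. the set
`{d | 1 ≤ d ∧ α n ≤ β d}` has a least element `L n`.  Then `L` is subadditive and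
`lim L n / n = α̂ / β̂` (division in `ℝ≥0∞`, which realizes the conventions
`r/0 = ∞`, `r/∞ = 0` for `r > 0`, `∞/0 = ∞` and `0/∞ = 0`). -/
theorem statement_1 (α β : ℕ → ℝ) (L : ℕ → ℕ)
    (hαpos : ∀ n, 1 ≤ n → 0 < α n)
    (hβpos : ∀ n, 1 ≤ n → 0 < β n)
    (hαsub : ∀ i j, 1 ≤ i → 1 ≤ j → α (i + j) ≤ α i + α j)
    (hβsuper : ∀ i j, 1 ≤ i → 1 ≤ j → β i + β j ≤ β (i + j))
    (hL : ∀ n, 1 ≤ n → IsLeast {d : ℕ | 1 ≤ d ∧ α n ≤ β d} (L n))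
    (A B : ℝ≥0∞)
    (hA : Tendsto (fun n : ℕ => ENNReal.ofReal (α n) / (n : ℝ≥0∞)) atTop (𝓝 A))
    (hB : Tendsto (fun n : ℕ => ENNReal.ofReal (β n) / (n : ℝ≥0∞)) atTop (𝓝 B)) :
    (∀ m n, 1 ≤ m → 1 ≤ n → L (m + n) ≤ L m + L n) ∧
    Tendsto (fun n : ℕ => (L n : ℝ≥0∞) / (n : ℝ≥0∞)) atTop (𝓝 (A / B)) := by
  have hαA : ∀ n, 1 ≤ n → A ≤ ENNReal.ofReal (α n) / (n : ℝ≥0∞) := by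
    intro n hn
    refine le_of_tendsto (hA.comp (aux_subseq n hn)) (Eventually.of_forall fun k => ?_)
    rw [← aux_div (α n) n k hn]
    exact ENNReal.div_le_div_right (ENNReal.ofReal_le_ofReal (aux_sub α hαsub n hn k)) _
  have hβB : ∀ n, 1 ≤ n → ENNReal.ofReal (β n) / (n : ℝ≥0∞) ≤ B := by
    intro n hn
    refine ge_of_tendsto (hB.comp (aux_subseq n hn)) (Eventually.of_forall fun k => ?_)
    rw [← aux_div (β n) n k hn]
    exact ENNReal.div_le_div_right (ENNReal.ofReal_le_ofReal (aux_super β hβsuper n hn k)) _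
  have hAtop : A ≠ ⊤ := by
    have := hαA 1 le_rfl
    simp only [Nat.cast_one, div_one] at this
    exact ne_top_of_le_ne_top ENNReal.ofReal_ne_top this
  refine ⟨?_, ?_⟩
  · intro m n hm hn
    apply (hL (m + n) (by omega)).2
    obtain ⟨⟨a1, a2⟩, -⟩ := hL m hm
    obtain ⟨⟨b1, b2⟩, -⟩ := hL n hn
    refine ⟨by omega, ?_⟩
    have := hαsub m n hm hn
    have := hβsuper _ _ a1 b1
    linarith
  · apply tendsto_order.2 ⟨?_, ?_⟩
    · intro c hc
      filter_upwards [eventually_ge_atTop 1] with n hn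
      refine lt_of_lt_of_le hc ?_
      apply ENNReal.div_le_of_le_mul
      obtain ⟨⟨b1, b2⟩, -⟩ := hL n hn
      have hl0 : (L n : ℝ≥0∞) ≠ 0 := by
        have : L n ≠ 0 := by omega
        exact_mod_cast this
      calc A ≤ ENNReal.ofReal (α n) / n := hαA n hn
        _ ≤ ENNReal.ofReal (β (L n)) / n :=
          ENNReal.div_le_div_right (ENNReal.ofReal_le_ofReal b2) _
        _ ≤ (B * L n) / n := by
          apply ENNReal.div_le_div_right
          exact (ENNReal.div_le_iff hl0 (ENNReal.natCast_ne_top _)).1 (hβB _ b1)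
        _ = L n / n * B := by
          simp only [div_eq_mul_inv]; ring
    · intro c hc
      have h1 : Tendsto (fun d : ℕ => A * (ENNReal.ofReal (β d) / (d : ℝ≥0∞))⁻¹) atTop
          (𝓝 (A * B⁻¹)) :=
        ENNReal.Tendsto.const_mul (ENNReal.tendsto_inv_iff.2 hB) (Or.inr hAtop)
      rw [div_eq_mul_inv] at hc
      obtain ⟨d, hd, hd1⟩ := ((h1.eventually_lt_const hc).and (eventually_ge_atTop 1)).exists
      have hbpos := hβpos d hd1
      have hne : (ENNReal.ofReal (β d) / (d : ℝ≥0∞))⁻¹ ≠ ⊤ := by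
        rw [ne_eq, ENNReal.inv_eq_top, ENNReal.div_eq_zero_iff]
        simp [hbpos]
      have h2 : Tendsto (fun n : ℕ => (d : ℝ≥0∞) / (n : ℝ≥0∞)) atTop (𝓝 0) := by
        have := ENNReal.Tendsto.const_mul (a := (d : ℝ≥0∞)) ENNReal.tendsto_inv_nat_nhds_zero
          (Or.inr (ENNReal.natCast_ne_top d))
        simpa [div_eq_mul_inv] using this
      have h3 := (ENNReal.Tendsto.mul_const hA (Or.inr hne)).add h2
      rw [add_zero] at h3
      filter_upwards [h3.eventually_lt_const hd, eventually_ge_atTop 1] with n hn hn1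
      exact (aux_upper α β L hαpos hβpos hβsuper hL n d hn1 hd1).trans_lt hn
end

section
/- Let α = {α_n}_{n∈ℕ} be a nondecreasing superadditive sequence of natural numbers. Then the sequence ←α, where ←α_n = inf{d ∈ ℕ : α_d ≥ n}, is a nondecreasing subadditive sequence of natural numbers, and its asymptotic growth factor satisfies lim_{n→∞} (←α_n)/n = (lim_{n→∞} α_n/n)^{−1} = α̂^{−1} (with the conventions 0^{−1} = ∞ and ∞^{−1} = 0). -/
open Filter Topology
open scoped ENNReal

/-- Let `α` be a nondecreasing superadditive sequence of (positive)
natural numbers.  Then the sequence `←α_n = inf {d ≥ 1 | α d ≥ n}` (computed by `sInf` in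
`ℕ`) is a well-defined natural number for every `n ≥ 1` (the set has a least element), is
nondecreasing and subadditive, and `lim (←α_n)/n = α̂⁻¹` where `α̂ = lim α n / n`; the
inverse is taken in `ℝ≥0∞`, realizing the conventions `0⁻¹ = ∞` and `∞⁻¹ = 0`. -/
theorem statement_5 (α : ℕ → ℕ)
    (hpos : ∀ n, 1 ≤ n → 1 ≤ α n)
    (hmono : ∀ m n, 1 ≤ m → m ≤ n → α m ≤ α n)
    (hsuper : ∀ i j, 1 ≤ i → 1 ≤ j → α i + α j ≤ α (i + j))
    (A : ℝ≥0∞)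
    (hA : Tendsto (fun n : ℕ => (α n : ℝ≥0∞) / (n : ℝ≥0∞)) atTop (𝓝 A)) :
    (∀ n, 1 ≤ n →
      IsLeast {d : ℕ | 1 ≤ d ∧ n ≤ α d} (sInf {d : ℕ | 1 ≤ d ∧ n ≤ α d})) ∧
    (∀ m n, 1 ≤ m → m ≤ n →
      sInf {d : ℕ | 1 ≤ d ∧ m ≤ α d} ≤ sInf {d : ℕ | 1 ≤ d ∧ n ≤ α d}) ∧
    (∀ m n, 1 ≤ m → 1 ≤ n →
      sInf {d : ℕ | 1 ≤ d ∧ m + n ≤ α d} ≤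
        sInf {d : ℕ | 1 ≤ d ∧ m ≤ α d} + sInf {d : ℕ | 1 ≤ d ∧ n ≤ α d}) ∧
    Tendsto (fun n : ℕ => ((sInf {d : ℕ | 1 ≤ d ∧ n ≤ α d} : ℕ) : ℝ≥0∞) / (n : ℝ≥0∞))
      atTop (𝓝 A⁻¹) := by
  have hge : ∀ n, 1 ≤ n → n ≤ α n := by
    intro n hn
    induction n, hn using Nat.le_induction with
    | base => exact hpos 1 le_rfl
    | succ k hk ih =>
      have h1 := hsuper k 1 hk le_rfl
      have h2 := hpos 1 le_rfl
      omega
  have hmem : ∀ n, 1 ≤ n → sInf {d : ℕ | 1 ≤ d ∧ n ≤ α d} ∈ {d : ℕ | 1 ≤ d ∧ n ≤ α d} :=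
    fun n hn => Nat.sInf_mem ⟨n, hn, hge n hn⟩
  have hle : ∀ n d, 1 ≤ d → n ≤ α d → sInf {d : ℕ | 1 ≤ d ∧ n ≤ α d} ≤ d :=
    fun n d h1 h2 => Nat.sInf_le ⟨h1, h2⟩
  generalize hg : (fun n => sInf {d : ℕ | 1 ≤ d ∧ n ≤ α d}) = g
  have hg' : ∀ n, sInf {d : ℕ | 1 ≤ d ∧ n ≤ α d} = g n := fun n => congrFun hg n
  simp only [hg'] at hmem hle ⊢
  refine ⟨fun n hn => ⟨hmem n hn, fun d hd => hle n d hd.1 hd.2⟩, ?_, ?_, ?_⟩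
  · intro m n hm hmn
    have h := hmem n (hm.trans hmn)
    exact hle m _ h.1 (hmn.trans h.2)
  · intro m n hm hn
    have h := hmem n hn
    have h' := hmem m hm
    exact hle _ _ (h.1.trans (Nat.le_add_left _ _))
      ((add_le_add h'.2 h.2).trans (hsuper _ _ h'.1 h.1))
  · have hgt : Tendsto g atTop atTop := by
      refine tendsto_atTop.2 fun K => ?_
      filter_upwards [eventually_gt_atTop (α K), eventually_ge_atTop 1] with n hn hn1
      by_contra hc
      have h := hmem n hn1
      have := hmono (g n) K h.1 (by omega)
      have := h.2
      omega
    have hgt1 : Tendsto (fun n => g n - 1) atTop atTop :=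
      (tendsto_sub_atTop_nat 1).comp hgt
    have hB : Tendsto (fun n : ℕ => (n : ℝ≥0∞) / (α n : ℝ≥0∞)) atTop (𝓝 A⁻¹) := by
      refine (tendsto_inv_iff.2 hA).congr' ?_
      filter_upwards [eventually_ge_atTop 1] with n hn
      refine ENNReal.inv_div (Or.inl (ENNReal.natCast_ne_top n)) (Or.inl ?_)
      exact_mod_cast (by omega : n ≠ 0)
    have hU := (hB.comp hgt1).add ENNReal.tendsto_inv_nat_nhds_zero
    rw [add_zero] at hU
    refine tendsto_of_tendsto_of_tendsto_of_le_of_le' (hB.comp hgt) hU ?_ ?_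
    · filter_upwards [eventually_ge_atTop 1] with n hn
      exact ENNReal.div_le_div_left (by exact_mod_cast (hmem n hn).2) _
    · filter_upwards [eventually_ge_atTop 1, hgt.eventually_ge_atTop 2] with n hn h2
      have hlt : α (g n - 1) ≤ n := by
        by_contra hc
        have := hle n (g n - 1) (by omega) (by omega)
        omega
      have he : ((g n : ℕ) : ℝ≥0∞) = ((g n - 1 : ℕ) : ℝ≥0∞) + 1 := by
        exact_mod_cast (by omega : g n = g n - 1 + 1)
      rw [he, ENNReal.add_div, one_div]
      refine add_le_add ?_ le_rfl
      exact ENNReal.div_le_div_left (by exact_mod_cast hlt) _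
end

section
/- Let K be a field of characteristic zero, R = K[x_0,…,x_N], S = K[y_0,…,y_N], A an index set, and for each a ∈ A let I_a = {I_{a,n}}_{n≥1} be a differentially closed graded filtration of homogeneous ideals of R. Then: (1) the intersection filtration ∩_{a∈A} I_a = {∩_{a∈A} I_{a,n}}_{n≥1} is a differentially closed graded filtration, and (2) L^s(∩_{a∈A} I_a) = Σ_{a∈A} L^s(I_a) as subspaces of S, for every s ≥ 1. -/
open MvPolynomial Filter Topology
open scoped ENNReal

/-- The differential operator `D_a = (1/a!) ∂^a/∂x^a`, characterized on monomials by
`D_a (x^b) = C(b,a) · x^(b-a)` when `b ≥ a` componentwise (and `0` otherwise), where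
`C(b,a) = ∏ᵢ (bᵢ choose aᵢ)`; note that the binomial coefficient vanishes when
`b ≥ a` fails, so no case split is needed. -/
noncomputable def Dop {m : ℕ} {K : Type*} [CommSemiring K] (a : Fin m →₀ ℕ)
    (f : MvPolynomial (Fin m) K) : MvPolynomial (Fin m) K :=
  ∑ b ∈ f.support,
    MvPolynomial.monomial (b - a) ((((∏ i, Nat.choose (b i) (a i)) : ℕ) : K) * f.coeff b)

/-- A filtration `{I n}` of ideals of `K[x_0,…,x_{m-1}]` is differentially closed if for
every `n ≥ 1`, every operator `D_a` with `|a| ≤ n - 1`, and every `F ∈ I n`, we have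
`D_a F ∈ I (n - |a|)`. -/
def DiffClosed {m : ℕ} {K : Type*} [CommSemiring K]
    (I : ℕ → Ideal (MvPolynomial (Fin m) K)) : Prop :=
  ∀ n, 1 ≤ n → ∀ a : Fin m →₀ ℕ, (a.sum fun _ k => k) ≤ n - 1 →
    ∀ F ∈ I n, Dop a F ∈ I (n - a.sum fun _ k => k)

/-- The iterated partial derivative `∂^a/∂y^a`. -/
noncomputable def multiPderiv {m : ℕ} {K : Type*} [CommSemiring K] (a : Fin m →₀ ℕ)
    (g : MvPolynomial (Fin m) K) : MvPolynomial (Fin m) K :=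
  (List.finRange m).foldl (fun h i => (fun q => MvPolynomial.pderiv i q)^[a i] h) g

/-- The action `F ∘ g` of `R = K[x]` on `S = K[y]` by partial differentiation: the
monomial `x^a` acts on `g` as `∂^a g/∂y^a`, extended linearly. -/
noncomputable def diffAction {m : ℕ} {K : Type*} [CommSemiring K]
    (F g : MvPolynomial (Fin m) K) : MvPolynomial (Fin m) K :=
  ∑ a ∈ F.support, F.coeff a • multiPderiv a g

/-- The perpendicular space `((I)_d)^⊥ = {g ∈ S_d | F ∘ g = 0 for all F ∈ I_d}` of the
degree-`d` part of an ideal `I ⊆ R`, inside `S_d`, for the differentiation action. -/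
def perpSet {m : ℕ} {K : Type*} [CommSemiring K]
    (I : Ideal (MvPolynomial (Fin m) K)) (d : ℕ) : Set (MvPolynomial (Fin m) K) :=
  {g | g ∈ MvPolynomial.homogeneousSubmodule (Fin m) K d ∧
       ∀ F ∈ I, F ∈ MvPolynomial.homogeneousSubmodule (Fin m) K d → diffAction F g = 0}

/-- `L^s(I) = ⊕_{d ≥ s+1} ((I_{d-s})_d)^⊥ ⊆ S`, the (internal direct) sum of the
perpendicular spaces, realized as the subspace of `S` spanned by them. -/
noncomputable def Lpow {m : ℕ} {K : Type*} [CommSemiring K]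
    (I : ℕ → Ideal (MvPolynomial (Fin m) K)) (s : ℕ) :
    Submodule K (MvPolynomial (Fin m) K) :=
  Submodule.span K (⋃ d ∈ Set.Ici (s + 1), perpSet (I (d - s)) d)

/-- An ideal of a polynomial ring is homogeneous when it contains all homogeneous
components of its elements. -/
def IsHomogeneousIdeal {m : ℕ} {K : Type*} [CommSemiring K]
    (I : Ideal (MvPolynomial (Fin m) K)) : Prop :=
  ∀ f ∈ I, ∀ d : ℕ, MvPolynomial.homogeneousComponent d f ∈ I

theorem aux_iter {m : ℕ} {K : Type*} [Field K] [CharZero K] (i : Fin m) (k : ℕ) :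
    ∀ c : Fin m →₀ ℕ, ∃ w : K, w ≠ 0 ∧ ∀ g : MvPolynomial (Fin m) K,
      coeff c ((fun q => MvPolynomial.pderiv i q)^[k] g) = w * coeff (c + Finsupp.single i k) g := by
  induction k with
  | zero => intro c; exact ⟨1, one_ne_zero, fun g => by simp⟩
  | succ k ih =>
    intro c
    obtain ⟨w, hw, h⟩ := ih c
    refine ⟨w * (((c + Finsupp.single i k) i : K) + 1), mul_ne_zero hw (Nat.cast_add_one_ne_zero _), fun g => ?_⟩
    rw [Function.iterate_succ_apply, h, coeff_pderiv, add_assoc, ← Finsupp.single_add]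
    ring

theorem aux_foldl {m : ℕ} {K : Type*} [Field K] [CharZero K] (a : Fin m →₀ ℕ)
    (l : List (Fin m)) :
    ∀ c : Fin m →₀ ℕ, ∃ w : K, w ≠ 0 ∧ ∀ g : MvPolynomial (Fin m) K,
      coeff c (l.foldl (fun h i => (fun q => MvPolynomial.pderiv i q)^[a i] h) g)
        = w * coeff (c + (l.map fun i => Finsupp.single i (a i)).sum) g := by
  induction l with
  | nil => intro c; exact ⟨1, one_ne_zero, fun g => by simp⟩
  | cons i l ih =>
    intro c
    obtain ⟨w, hw, h⟩ := ih c
    obtain ⟨w', hw', h'⟩ := aux_iter (K := K) i (a i) (c + (l.map fun i => Finsupp.single i (a i)).sum)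
    refine ⟨w * w', mul_ne_zero hw hw', fun g => ?_⟩
    rw [List.foldl_cons, h, h', List.map_cons, List.sum_cons, mul_assoc, add_assoc,
      add_comm (Finsupp.single i (a i))]

theorem aux_multi {m : ℕ} {K : Type*} [Field K] [CharZero K] (a c : Fin m →₀ ℕ) :
    ∃ w : K, w ≠ 0 ∧ ∀ g : MvPolynomial (Fin m) K,
      coeff c (multiPderiv a g) = w * coeff (c + a) g := by
  obtain ⟨w, hw, h⟩ := aux_foldl (K := K) a (List.finRange m) c
  refine ⟨w, hw, fun g => ?_⟩
  rw [← Fin.sum_univ_def, Finsupp.univ_sum_single] at h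
  exact h g

theorem aux_weight (m : ℕ) (K : Type*) [Field K] [CharZero K] :
    ∃ w : (Fin m →₀ ℕ) → K, (∀ a, w a ≠ 0) ∧ ∀ (d : ℕ) (a : Fin m →₀ ℕ)
      (g : MvPolynomial (Fin m) K), a.degree = d → g.IsHomogeneous d →
      multiPderiv a g = C (w a * coeff a g) := by
  choose w hw h using fun a : Fin m →₀ ℕ => aux_multi (K := K) a 0
  refine ⟨w, hw, fun d a g ha hg => ?_⟩
  ext c
  by_cases hc : c = 0
  · subst hc
    rw [h, zero_add, coeff_zero_C]
  · obtain ⟨w', -, h'⟩ := aux_multi (K := K) a c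
    rw [h', coeff_C, if_neg (Ne.symm hc), hg.coeff_eq_zero, mul_zero]
    rw [map_add, ha]
    have : c.degree ≠ 0 := by rwa [Ne, Finsupp.degree_eq_zero_iff]
    omega

theorem aux_pair (m : ℕ) (K : Type*) [Field K] [CharZero K] :
    ∃ w : (Fin m →₀ ℕ) → K, (∀ a, w a ≠ 0) ∧ ∀ (d : ℕ) 
      (F g : MvPolynomial (Fin m) K), F.IsHomogeneous d → g.IsHomogeneous d →
      diffAction F g = C (∑ a ∈ F.support, w a * coeff a F * coeff a g) := by
  obtain ⟨w, hw, h⟩ := aux_weight m K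
  refine ⟨w, hw, fun d F g hF hg => ?_⟩
  rw [diffAction, map_sum]
  refine Finset.sum_congr rfl fun a ha => ?_
  have had : a.degree = d := by
    by_contra hne
    exact (mem_support_iff.1 ha) (hF.coeff_eq_zero hne)
  rw [h d a g had hg, smul_eq_C_mul, ← C_mul]
  congr 1; ring

theorem aux_rep {m : ℕ} {K : Type*} [Field K] [CharZero K] (d : ℕ)
    (φ : MvPolynomial (Fin m) K →ₗ[K] K) :
    ∃ F : MvPolynomial (Fin m) K, F.IsHomogeneous d ∧
      ∀ g : MvPolynomial (Fin m) K, g.IsHomogeneous d →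
        diffAction F g = C (φ g) ∧ diffAction g F = C (φ g) := by
  classical
  obtain ⟨w, hw, h⟩ := aux_pair m K
  have hfin : {b : Fin m →₀ ℕ | b.degree = d}.Finite := by
    refine (Finset.finite_toSet (Finset.finsuppAntidiag Finset.univ d)).subset fun b hb => ?_
    have hb' : b.degree = d := hb
    simp [Finset.mem_finsuppAntidiag, ← hb', Finsupp.degree_eq_sum]
  set T := hfin.toFinset with hT
  have hmem : ∀ b, b ∈ T ↔ b.degree = d := fun b => by simp [hT]
  let F : MvPolynomial (Fin m) K := ∑ b ∈ T, monomial b (φ (monomial b 1) / w b)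
  have hF : F.IsHomogeneous d := 
    IsHomogeneous.sum _ _ _ fun b hb => isHomogeneous_monomial _ ((hmem b).1 hb)
  have hFc : ∀ b ∈ T, coeff b F = φ (monomial b 1) / w b := by
    intro b hb
    simp only [F, coeff_sum, coeff_monomial]
    rw [Finset.sum_ite_eq' T b, if_pos hb]
  have hsub : ∀ G : MvPolynomial (Fin m) K, G.IsHomogeneous d → G.support ⊆ T := by
    intro G hG a ha
    rw [hmem]
    by_contra hne
    exact (mem_support_iff.1 ha) (hG.coeff_eq_zero hne)
  have hext : ∀ G H : MvPolynomial (Fin m) K, G.IsHomogeneous d →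
      ∑ a ∈ G.support, w a * coeff a G * coeff a H = ∑ a ∈ T, w a * coeff a G * coeff a H := by
    intro G H hG
    refine Finset.sum_subset (hsub G hG) fun a _ ha => ?_
    rw [notMem_support_iff.1 ha]; ring
  have hφ : ∀ g : MvPolynomial (Fin m) K, g.IsHomogeneous d →
      φ g = ∑ a ∈ T, coeff a g * φ (monomial a 1) := by
    intro g hg
    conv_lhs => rw [g.as_sum, map_sum]
    rw [← Finset.sum_subset (hsub g hg)]
    · refine Finset.sum_congr rfl fun a _ => ?_
      rw [← smul_eq_mul, ← map_smul, smul_monomial, smul_eq_mul, mul_one]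
    · intro a _ ha
      rw [notMem_support_iff.1 ha, zero_mul]
  refine ⟨F, hF, fun g hg => ⟨?_, ?_⟩⟩
  · rw [h d F g hF hg, hext F g hF, hφ g hg]
    congr 1
    refine Finset.sum_congr rfl fun a ha => ?_
    rw [hFc a ha]
    have := hw a
    field_simp
  · rw [h d g F hg hF, hext g F hg, hφ g hg]
    congr 1
    refine Finset.sum_congr rfl fun a ha => ?_
    rw [hFc a ha]
    have := hw a
    field_simp

theorem aux_perp {m : ℕ} {K : Type*} [Field K] [CharZero K] {A : Type*}
    (J : A → Ideal (MvPolynomial (Fin m) K)) (d : ℕ) (P : Submodule K (MvPolynomial (Fin m) K))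
    (hP : ∀ a, perpSet (J a) d ⊆ P) : perpSet (⨅ a, J a) d ⊆ P := by
  rintro g ⟨hg, hgF⟩
  by_contra hgP
  obtain ⟨φ, hφg, hφ⟩ := Submodule.exists_le_ker_of_notMem (p := P) hgP
  obtain ⟨F, hF, hFφ⟩ := aux_rep d φ
  have hFJ : F ∈ ⨅ a, J a := by
    rw [Submodule.mem_iInf]
    intro a
    by_contra hFa
    obtain ⟨ψ, hψF, hψ⟩ := Submodule.exists_le_ker_of_notMem
      (p := (J a).restrictScalars K) (v := F) hFa
    obtain ⟨G, hG, hGψ⟩ := aux_rep d ψ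
    have hGp : G ∈ perpSet (J a) d := by
      refine ⟨hG, fun H hH hHd => ?_⟩
      rw [(hGψ H hHd).2, LinearMap.mem_ker.1 (hψ hH), C_0]
    have h1 : φ G = 0 := LinearMap.mem_ker.1 (hφ (hP a hGp))
    have h2 := (hFφ G hG).1
    rw [(hGψ F hF).2, h1] at h2
    exact hψF (C_injective _ _ h2)
  have h3 := hgF F hFJ hF
  rw [(hFφ g hg).1, ← C_0] at h3
  exact hφg (C_injective _ _ h3)

/-- (Proposition `IntersectionToSum`.)  Over a field `K` of
characteristic zero, if `{I_{a,n}}_n` is a differentially closed graded filtration of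
homogeneous ideals of `R = K[x_0,…,x_N]` for each `a` in an index set `A`, then
(1) the intersection filtration `{⋂_a I_{a,n}}_n` is a differentially closed graded
filtration, and (2) `L^s(⋂_a I_a) = Σ_a L^s(I_a)` for every `s ≥ 1`. -/
theorem statement_12 {N : ℕ} {K : Type*} [Field K] [CharZero K] {A : Type*}
    (I : A → ℕ → Ideal (MvPolynomial (Fin (N + 1)) K))
    (hfil : ∀ a, ∀ n, 1 ≤ n → I a (n + 1) ≤ I a n)
    (hgr : ∀ a, ∀ m n, 1 ≤ m → 1 ≤ n → I a m * I a n ≤ I a (m + n))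
    (hhom : ∀ a, ∀ n, 1 ≤ n → IsHomogeneousIdeal (I a n))
    (hdc : ∀ a, DiffClosed (I a)) :
    ((∀ n, 1 ≤ n → (⨅ a, I a (n + 1)) ≤ ⨅ a, I a n) ∧
      (∀ m n, 1 ≤ m → 1 ≤ n → (⨅ a, I a m) * (⨅ a, I a n) ≤ ⨅ a, I a (m + n)) ∧
      DiffClosed (fun n => ⨅ a, I a n)) ∧
    (∀ s, 1 ≤ s → Lpow (fun n => ⨅ a, I a n) s = ⨆ a, Lpow (I a) s) := by
  refine ⟨⟨fun n hn => iInf_mono fun a => hfil a n hn, fun m n hm hn => ?_, ?_⟩, fun s hs => ?_⟩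
  · exact le_iInf fun a => (Ideal.mul_mono (iInf_le _ a) (iInf_le _ a)).trans (hgr a m n hm hn)
  · intro n hn b hb F hF
    rw [Submodule.mem_iInf] at hF ⊢
    exact fun a => hdc a n hn b hb F (hF a)
  · apply le_antisymm
    · refine Submodule.span_le.2 (Set.iUnion₂_subset fun d hd => ?_)
      refine aux_perp (fun a => I a (d - s)) d _ fun a => ?_
      intro g hg
      refine (le_iSup (fun a => Lpow (I a) s) a) ?_
      exact Submodule.subset_span (Set.mem_biUnion hd hg)
    · refine iSup_le fun a => Submodule.span_mono ?_
      refine Set.iUnion₂_mono fun d hd g hg => ⟨hg.1, fun F hF hFd => hg.2 F ?_ hFd⟩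
      exact (Submodule.mem_iInf _).1 hF a
end

section
/- Let K be a field of characteristic zero, R = K[x_0,…,x_N], S = K[y_0,…,y_N], and let I = {I_n}_{n≥1} be a differentially closed graded filtration of homogeneous ideals of R. Put α_n = α(I_n), the initial degree of I_n. Then for a fixed s ≥ 1, the quotient S/L^s(I) has finite length (i.e., is a finite-dimensional K-vector space) if and only if α_n > n + s for all n large enough. In particular, S/L^s(I) has finite length for all s ≥ 1 if and only if the sequence {α_n − n}_{n∈ℕ} is not bounded above. -/
open MvPolynomial Filter Topology
open scoped ENNReal

/-- The initial degree `α(I) = min {deg f | 0 ≠ f ∈ I}` of an ideal. -/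
noncomputable def initialDegree {m : ℕ} {K : Type*} [CommSemiring K]
    (I : Ideal (MvPolynomial (Fin m) K)) : ℕ :=
  sInf {d : ℕ | ∃ f ∈ I, f ≠ 0 ∧ f.totalDegree = d}

section Helpers
variable {m : ℕ} {K : Type*} [Field K]

lemma coeff_iter_pderiv (i : Fin m) (k : ℕ) (g : MvPolynomial (Fin m) K) (b : Fin m →₀ ℕ)
    (hb : b i = 0) :
    coeff b ((fun q => MvPolynomial.pderiv i q)^[k] g)
      = (k.factorial : K) * coeff (b + Finsupp.single i k) g := by
  induction k generalizing g with
  | zero => simp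
  | succ k ih =>
    rw [Function.iterate_succ_apply, ih, coeff_pderiv]
    have : b + Finsupp.single i k + Finsupp.single i 1 = b + Finsupp.single i (k + 1) := by
      rw [add_assoc, ← Finsupp.single_add]
    rw [this, Nat.factorial_succ]
    simp [hb]
    ring

lemma coeff_foldl_pderiv (a : Fin m →₀ ℕ) (l : List (Fin m)) (hl : l.Nodup)
    (g : MvPolynomial (Fin m) K) (b : Fin m →₀ ℕ) (hb : ∀ i ∈ l, b i = 0) :
    coeff b (l.foldl (fun h i => (fun q => MvPolynomial.pderiv i q)^[a i] h) g)
      = ((l.map fun i => ((a i).factorial : K)).prod) *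
        coeff (b + (l.map fun i => Finsupp.single i (a i)).sum) g := by
  induction l generalizing g with
  | nil => simp
  | cons i l ih =>
    rw [List.nodup_cons] at hl
    rw [List.foldl_cons, ih hl.2 _ (fun j hj => hb j (List.mem_cons_of_mem _ hj)),
      coeff_iter_pderiv]
    · simp only [List.map_cons, List.prod_cons, List.sum_cons]
      rw [add_assoc, add_comm _ (Finsupp.single i (a i))]
      ring
    · have h0 : ∀ l : List (Fin m), i ∉ l →
          ((l.map fun j => Finsupp.single j (a j)).sum : Fin m →₀ ℕ) i = 0 := by
        intro l hi
        induction l with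
        | nil => simp
        | cons j l ih2 =>
          simp only [List.mem_cons, not_or] at hi
          simp [ih2 hi.2, Finsupp.single_apply, Ne.symm hi.1]
      simp [hb i (by simp), h0 l hl.1]

lemma coeff_zero_multiPderiv (a : Fin m →₀ ℕ) (g : MvPolynomial (Fin m) K) :
    coeff 0 (multiPderiv a g) = (∏ i, ((a i).factorial : K)) * coeff a g := by
  unfold multiPderiv
  rw [coeff_foldl_pderiv a _ (List.nodup_finRange m) g 0 (by simp)]
  congr 1
  · rw [← List.ofFn_eq_map, List.sum_ofFn, zero_add, Finsupp.univ_sum_single]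

/-- The functional given by pairing with `F`. -/
noncomputable def pairF (F : MvPolynomial (Fin m) K) : MvPolynomial (Fin m) K →ₗ[K] K :=
  ∑ a ∈ F.support, (F.coeff a * ∏ i, ((a i).factorial : K)) • MvPolynomial.lcoeff K a

lemma pairF_apply (F g : MvPolynomial (Fin m) K) :
    pairF F g = ∑ a ∈ F.support, (F.coeff a * ∏ i, ((a i).factorial : K)) * coeff a g := by
  simp [pairF, LinearMap.sum_apply, MvPolynomial.lcoeff_apply]

lemma pairF_eq (F g : MvPolynomial (Fin m) K) : pairF F g = coeff 0 (diffAction F g) := by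
  rw [pairF_apply, diffAction, coeff_sum]
  refine Finset.sum_congr rfl fun a _ => ?_
  rw [coeff_smul, coeff_zero_multiPderiv, smul_eq_mul, mul_assoc]

lemma pairF_of_ne {F g : MvPolynomial (Fin m) K} {d e : ℕ} (hF : F.IsHomogeneous d)
    (hg : g.IsHomogeneous e) (h : d ≠ e) : pairF F g = 0 := by
  rw [pairF_apply]
  refine Finset.sum_eq_zero fun a ha => ?_
  have : a.degree = d := by
    by_contra hh
    exact (mem_support_iff.1 ha) (hF.coeff_eq_zero hh)
  rw [hg.coeff_eq_zero (by rw [this]; exact h), mul_zero]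

lemma pairF_monomial [CharZero K] {F : MvPolynomial (Fin m) K} {b : Fin m →₀ ℕ}
    (hb : b ∈ F.support) : pairF F (monomial b 1) ≠ 0 := by
  classical
  rw [pairF_apply, Finset.sum_eq_single b]
  · rw [coeff_monomial, if_pos rfl, mul_one]
    refine mul_ne_zero (mem_support_iff.1 hb) (Finset.prod_ne_zero_iff.2 fun i _ => ?_)
    exact_mod_cast Nat.factorial_ne_zero _
  · intro c _ hc
    rw [coeff_monomial, if_neg (Ne.symm hc), mul_zero]
  · intro h; exact absurd hb h

lemma pairF_Lpow (I : ℕ → Ideal (MvPolynomial (Fin m) K)) (s n : ℕ)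
    {F : MvPolynomial (Fin m) K} (hF : F ∈ I n) (hh : F.IsHomogeneous (n + s)) :
    Lpow I s ≤ LinearMap.ker (pairF F) := by
  unfold Lpow
  rw [Submodule.span_le]
  intro g hg
  simp only [Set.mem_iUnion] at hg
  obtain ⟨d, hd, hg⟩ := hg
  obtain ⟨hg1, hg2⟩ := hg
  rw [mem_homogeneousSubmodule] at hg1
  rw [SetLike.mem_coe, LinearMap.mem_ker]
  by_cases h : n + s = d
  · have hn : d - s = n := by omega
    rw [hn] at hg2
    rw [pairF_eq, hg2 F hF ((mem_homogeneousSubmodule _ _).2 (h ▸ hh)), coeff_zero]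
  · exact pairF_of_ne hh hg1 h

lemma exists_top_coeff {f : MvPolynomial (Fin m) K} (hf : f ≠ 0) :
    ∃ b ∈ f.support, b.degree = f.totalDegree := by
  have hne : f.support.Nonempty := support_nonempty.2 hf
  obtain ⟨b, hb, h⟩ := Finset.exists_mem_eq_sup f.support hne (fun s => s.sum fun _ e => e)
  exact ⟨b, hb, by rw [totalDegree, h]; rfl⟩

lemma lt_initialDegree_iff {N : ℕ} (J : Ideal (MvPolynomial (Fin (N + 1)) K))
    (hJ : IsHomogeneousIdeal J) (hne : J ≠ ⊥) (n : ℕ) :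
    n < initialDegree J ↔ ∀ F ∈ J, F.IsHomogeneous n → F = 0 := by
  constructor
  · intro h F hF hh
    by_contra h0
    have := Nat.sInf_le (s := {d : ℕ | ∃ f ∈ J, f ≠ 0 ∧ f.totalDegree = d})
      ⟨F, hF, h0, hh.totalDegree h0⟩
    unfold initialDegree at h
    omega
  · intro h
    by_contra hlt
    obtain ⟨f0, hf0, hf0'⟩ := Submodule.exists_mem_ne_zero_of_ne_bot hne
    obtain ⟨f, hf, hf', hd⟩ := Nat.sInf_mem
      (s := {d : ℕ | ∃ f ∈ J, f ≠ 0 ∧ f.totalDegree = d}) ⟨_, f0, hf0, hf0', rfl⟩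
    change f.totalDegree = initialDegree J at hd
    have hle : f.totalDegree ≤ n := by omega
    have h1 := hJ f hf f.totalDegree
    have h2 : homogeneousComponent f.totalDegree f ≠ 0 := by
      obtain ⟨b, hb, hbd⟩ := exists_top_coeff hf'
      intro h0
      have := congrArg (coeff b) h0
      rw [coeff_homogeneousComponent, if_pos hbd, coeff_zero] at this
      exact mem_support_iff.1 hb this
    have h3 := h (homogeneousComponent f.totalDegree f * X 0 ^ (n - f.totalDegree))
      (J.mul_mem_right _ h1) (by
        have := (homogeneousComponent_isHomogeneous f.totalDegree f).mul
          (isHomogeneous_X_pow (R := K) (0 : Fin (N + 1)) (n - f.totalDegree))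
        rwa [Nat.add_sub_cancel' hle] at this)
    exact (mul_ne_zero h2 (pow_ne_zero _ (X_ne_zero _))) h3

lemma Dop_single (i : Fin m) (f : MvPolynomial (Fin m) K) :
    Dop (Finsupp.single i 1) f = pderiv i f := by
  classical
  conv_rhs => rw [f.as_sum, map_sum]
  unfold Dop
  refine Finset.sum_congr rfl fun b _ => ?_
  rw [pderiv_monomial]
  congr 1
  rw [mul_comm]
  congr 2
  rw [Finset.prod_eq_single i]
  · simp
  · intro j _ hj
    simp [Finsupp.single_apply, Ne.symm hj]
  · simp

lemma initialDegree_pos [CharZero K] (J : Ideal (MvPolynomial (Fin m) K)) (h : 0 < initialDegree J) :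
    J ≠ ⊤ := by
  rintro rfl
  have := Nat.sInf_le (s := {d : ℕ | ∃ f ∈ (⊤ : Ideal (MvPolynomial (Fin m) K)),
    f ≠ 0 ∧ f.totalDegree = d}) ⟨1, trivial, one_ne_zero, totalDegree_one⟩
  unfold initialDegree at h
  omega

lemma initialDegree_step [CharZero K] (I : ℕ → Ideal (MvPolynomial (Fin m) K))
    (hfil : ∀ n, 1 ≤ n → I (n + 1) ≤ I n)
    (hne : ∀ n, 1 ≤ n → I n ≠ ⊥)
    (hdc : DiffClosed I) (n : ℕ) (hn : 1 ≤ n) (hpos : 0 < initialDegree (I n)) :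
    initialDegree (I n) + 1 ≤ initialDegree (I (n + 1)) := by
  obtain ⟨f0, hf0, hf0'⟩ := Submodule.exists_mem_ne_zero_of_ne_bot (hne (n + 1) (by omega))
  obtain ⟨f, hf, hf', hd⟩ := Nat.sInf_mem
      (s := {d : ℕ | ∃ f ∈ I (n + 1), f ≠ 0 ∧ f.totalDegree = d}) ⟨_, f0, hf0, hf0', rfl⟩
  change f.totalDegree = initialDegree (I (n + 1)) at hd
  rw [← hd]
  have hle : ∀ g ∈ I n, g ≠ 0 → initialDegree (I n) ≤ g.totalDegree := fun g hg hg' =>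
    Nat.sInf_le ⟨g, hg, hg', rfl⟩
  have h1 := hle f (hfil n hn hf) hf'
  obtain ⟨b, hb, hbd⟩ := exists_top_coeff hf'
  have hb0 : b ≠ 0 := by
    rintro rfl
    simp at hbd
    omega
  obtain ⟨i, hi⟩ := Finsupp.ne_iff.1 hb0
  rw [Finsupp.zero_apply] at hi
  have hs : ((Finsupp.single i 1 : Fin m →₀ ℕ).sum fun _ k => k) = 1 := by simp
  have hD := hdc (n + 1) (by omega) (Finsupp.single i 1) (by rw [hs]; omega) f hf
  rw [hs, Dop_single, Nat.add_sub_cancel] at hD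
  have hD0 : pderiv i f ≠ 0 := by
    intro h0
    have := congrArg (coeff (b - Finsupp.single i 1)) h0
    rw [coeff_pderiv, coeff_zero, tsub_add_cancel_of_le
      (Finsupp.single_le_iff.2 (Nat.one_le_iff_ne_zero.2 hi))] at this
    rcases mul_eq_zero.1 this with h | h
    · exact mem_support_iff.1 hb h
    · exact Nat.cast_add_one_ne_zero _ h
  have h2 := hle _ hD hD0
  obtain ⟨c, hc, hcd⟩ := exists_top_coeff hD0
  have h3 : c + Finsupp.single i 1 ∈ f.support := by
    rw [mem_support_iff] at hc ⊢
    rw [coeff_pderiv] at hc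
    exact left_ne_zero_of_mul hc
  have h4 : (c + Finsupp.single i 1).degree ≤ f.totalDegree := le_totalDegree h3
  rw [map_add, Finsupp.degree_single] at h4
  omega

lemma finite_quot (I : ℕ → Ideal (MvPolynomial (Fin m) K)) (s n0 : ℕ)
    (hn0 : 1 ≤ n0) (h : ∀ n, n0 ≤ n → ∀ F ∈ I n, F.IsHomogeneous (n + s) → F = 0) :
    Module.Finite K (MvPolynomial (Fin m) K ⧸ Lpow I s) := by
  refine Module.Finite.of_surjective
    ((Lpow I s).mkQ ∘ₗ (restrictTotalDegree (Fin m) K (n0 + s)).subtype) ?_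
  rw [← LinearMap.range_eq_top, LinearMap.range_comp, Submodule.range_subtype, eq_top_iff]
  rintro x -
  obtain ⟨p, rfl⟩ := (Lpow I s).mkQ_surjective x
  induction p using MvPolynomial.induction_on' with
  | add p q hp hq => rw [map_add]; exact Submodule.add_mem _ hp hq
  | monomial b c =>
    by_cases hb : b.degree ≤ n0 + s
    · refine ⟨_, ?_, rfl⟩
      rw [SetLike.mem_coe, mem_restrictTotalDegree]
      exact (totalDegree_monomial_le b c).trans hb
    · have : (Lpow I s).mkQ (monomial b c) = 0 := by
        rw [Submodule.mkQ_apply, Submodule.Quotient.mk_eq_zero]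
        refine Submodule.subset_span ?_
        simp only [Set.mem_iUnion]
        refine ⟨b.degree, Set.mem_Ici.2 (by omega), ?_, ?_⟩
        · exact (mem_homogeneousSubmodule _ _).2 (isHomogeneous_monomial c rfl)
        · intro F hF hFh
          rw [mem_homogeneousSubmodule] at hFh
          rw [h (b.degree - s) (by omega) F hF (by
            rwa [Nat.sub_add_cancel (by omega)])]
          simp [diffAction]
      rw [this]; exact Submodule.zero_mem _

lemma eventually_of_finite [CharZero K] (I : ℕ → Ideal (MvPolynomial (Fin m) K)) (s : ℕ)
    (hfin : Module.Finite K (MvPolynomial (Fin m) K ⧸ Lpow I s)) :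
    {n | ∃ F ∈ I n, F.IsHomogeneous (n + s) ∧ F ≠ 0}.Finite := by
  classical
  set D := {n | ∃ F ∈ I n, F.IsHomogeneous (n + s) ∧ F ≠ 0} with hD
  choose F hF hh h0 using fun n : D => n.2
  choose b hb using fun n : D => support_nonempty.2 (h0 n)
  have hbh : ∀ n : D, (monomial (b n) (1 : K)).IsHomogeneous (n + s) := fun n => by
    refine isHomogeneous_monomial _ ?_
    by_contra hc
    exact mem_support_iff.1 (hb n) ((hh n).coeff_eq_zero hc)
  have hli : LinearIndependent K (fun n : D => (Lpow I s).mkQ (monomial (b n) 1)) := by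
    rw [linearIndependent_iff']
    intro t c hc n hn
    have := congrArg ((Lpow I s).liftQ (pairF (F n)) (pairF_Lpow I s n (hF n) (hh n))) hc
    rw [map_sum, map_zero, Finset.sum_eq_single n] at this
    · rw [map_smul, Submodule.mkQ_apply, Submodule.liftQ_apply, smul_eq_mul] at this
      exact (mul_eq_zero.1 this).resolve_right (pairF_monomial (hb n))
    · intro k _ hk
      rw [map_smul, Submodule.mkQ_apply, Submodule.liftQ_apply,
        pairF_of_ne (hh n) (hbh k), smul_zero]
      intro he
      exact hk (Subtype.ext (by omega))
    · intro h; exact absurd hn h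
  have : Finite D := hli.finite_of_isNoetherian
  exact Set.toFinite D

end Helpers

/-- (Lemma `FiniteLength`.)  Over a field `K` of characteristic zero,
let `{I n}` be a differentially closed graded filtration of (nonzero) homogeneous ideals
of `R = K[x_0,…,x_N]` and put `α_n = α(I_n)`, the initial degree.  Then for fixed
`s ≥ 1`, the quotient `S / L^s(I)` has finite length (equivalently, is a
finite-dimensional `K`-vector space) if and only if `α_n > n + s` for all `n` large
enough.  In particular, `S / L^s(I)` has finite length for all `s ≥ 1` if and only if the
sequence `{α_n - n}` is not bounded above. -/
theorem statement_13 {N : ℕ} {K : Type*} [Field K] [CharZero K]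
    (I : ℕ → Ideal (MvPolynomial (Fin (N + 1)) K))
    (hfil : ∀ n, 1 ≤ n → I (n + 1) ≤ I n)
    (hgr : ∀ m n, 1 ≤ m → 1 ≤ n → I m * I n ≤ I (m + n))
    (hhom : ∀ n, 1 ≤ n → IsHomogeneousIdeal (I n))
    (hne : ∀ n, 1 ≤ n → I n ≠ ⊥)
    (hdc : DiffClosed I) :
    (∀ s, 1 ≤ s →
      (Module.Finite K (MvPolynomial (Fin (N + 1)) K ⧸ Lpow I s) ↔
        ∀ᶠ n in atTop, n + s < initialDegree (I n))) ∧
    ((∀ s, 1 ≤ s → Module.Finite K (MvPolynomial (Fin (N + 1)) K ⧸ Lpow I s)) ↔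
      ∀ C : ℕ, ∃ n, 1 ≤ n ∧ n + C < initialDegree (I n)) := by
  have main : ∀ s, 1 ≤ s →
      (Module.Finite K (MvPolynomial (Fin (N + 1)) K ⧸ Lpow I s) ↔
        ∀ᶠ n in atTop, n + s < initialDegree (I n)) := by
    intro s _
    constructor
    · intro hfin
      have hf := eventually_of_finite I s hfin
      obtain ⟨B, hB⟩ := hf.bddAbove
      rw [eventually_atTop]
      refine ⟨B + 1, fun n hn => ?_⟩
      rw [lt_initialDegree_iff _ (hhom n (by omega)) (hne n (by omega))]
      intro F hF hh
      by_contra h0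
      have := hB (show n ∈ _ from ⟨F, hF, hh, h0⟩)
      omega
    · intro h
      rw [eventually_atTop] at h
      obtain ⟨B, hB⟩ := h
      refine finite_quot I s (B + 1) (by omega) fun n hn => ?_
      exact (lt_initialDegree_iff _ (hhom n (by omega)) (hne n (by omega)) _).1
        (hB n (by omega))
  refine ⟨main, ?_⟩
  constructor
  · intro h C
    have h1 := (main (C + 1) (by omega)).1 (h (C + 1) (by omega))
    obtain ⟨n, hn, hn1⟩ := (h1.and (eventually_ge_atTop 1)).exists
    exact ⟨n, hn1, by omega⟩
  · intro h s hs
    rw [main s hs, eventually_atTop]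
    obtain ⟨n, hn, hlt⟩ := h s
    refine ⟨n, fun k hk => ?_⟩
    induction k, hk using Nat.le_induction with
    | base => exact hlt
    | succ k hk ih =>
      have := initialDegree_step I hfil hne hdc k (by omega) (by omega)
      omega
end
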